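/- Let α > 1, β ≥ 1, and let (V_n)_{n ≥ 0} be a sequence of nonnegative real numbers satisfying V_n ≤ β^n V_{n−1}^α for every n ≥ 1. Then for every n ≥ 0, V_n ≤ ( β^{α/(α−1)²} V₀ )^{α^n}. In particular, if V₀ < β^{−α/(α−1)²}, then V_n → 0 as n → ∞. -/

import Mathlib

open Real Filter

/-!
For any solution `e` of the affine recursion `e (n + 1) + (n + 1) = α * e n`, the rescaled sequence
`W n = β ^ e n * V n` absorbs the factors `β ^ n` and satisfies `W (n + 1) ≤ W n ^ α`, hence
`W n ≤ W 0 ^ α ^ n`. The solution that is affine in `n` is nonnegative and equals `α / (α - 1) ^ 2`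
at `n = 0`, so `V n ≤ W n` when `1 ≤ β`, and `W 0` is the base of the asserted bound.
-/

theorem le_rpow_pow_of_le_rpow {α : ℝ} {W : ℕ → ℝ} (hα : 0 ≤ α) (hW : ∀ n, 0 ≤ W n)
    (hrec : ∀ n, W (n + 1) ≤ W n ^ α) (n : ℕ) : W n ≤ W 0 ^ (α ^ n) := by
  induction n with
  | zero => simp
  | succ n ih =>
    calc W (n + 1) ≤ W n ^ α := hrec n
      _ ≤ (W 0 ^ (α ^ n)) ^ α := rpow_le_rpow (hW n) ih hα
      _ = W 0 ^ (α ^ (n + 1)) := by rw [← rpow_mul (hW 0), pow_succ]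

theorem rpow_mul_le_rpow_mul_rpow {α β d e e' x y : ℝ} (hβ : 0 < β) (hx : 0 ≤ x)
    (he : e' + d = α * e) (hxy : y ≤ β ^ d * x ^ α) :
    β ^ e' * y ≤ (β ^ e * x) ^ α :=
  calc β ^ e' * y ≤ β ^ e' * (β ^ d * x ^ α) := by gcongr
    _ = β ^ (α * e) * x ^ α := by rw [← mul_assoc, ← rpow_add hβ, he]
    _ = (β ^ e * x) ^ α := by
      rw [mul_rpow (by positivity) hx, ← rpow_mul hβ.le, mul_comm α]

theorem tendsto_rpow_pow_atTop_nhds_zero {α x : ℝ} (hα : 1 < α) (hx₀ : -1 < x) (hx₁ : x < 1) :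
    Tendsto (fun n : ℕ => x ^ (α ^ n)) atTop (nhds 0) :=
  (tendsto_rpow_atTop_of_base_lt_one x hx₀ hx₁).comp (tendsto_pow_atTop_atTop_of_one_lt hα)

/-- The exponent `e n` for which the weight `β ^ e n` makes the De Giorgi recursion homogeneous:
the solution of `e (n + 1) + (n + 1) = α * e n` that is affine in `n`. -/
noncomputable def deGiorgiExponent (α : ℝ) (n : ℕ) : ℝ :=
  n / (α - 1) + α / (α - 1) ^ 2

theorem deGiorgiExponent_zero (α : ℝ) : deGiorgiExponent α 0 = α / (α - 1) ^ 2 := by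
  simp [deGiorgiExponent]

theorem deGiorgiExponent_nonneg {α : ℝ} (hα : 1 < α) (n : ℕ) : 0 ≤ deGiorgiExponent α n :=
  add_nonneg (div_nonneg n.cast_nonneg (sub_nonneg.mpr hα.le))
    (div_nonneg (by linarith) (sq_nonneg _))

theorem deGiorgiExponent_succ_add {α : ℝ} (hα : α ≠ 1) (n : ℕ) :
    deGiorgiExponent α (n + 1) + (n + 1 : ℕ) = α * deGiorgiExponent α n := by
  have hα' : α - 1 ≠ 0 := sub_ne_zero.mpr hα
  unfold deGiorgiExponent
  push_cast
  field_simp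
  ring

theorem rpow_deGiorgiExponent_mul_le {α β : ℝ} (hα₀ : 0 ≤ α) (hα₁ : α ≠ 1) (hβ : 0 < β)
    {V : ℕ → ℝ} (hV : ∀ n, 0 ≤ V n)
    (hrec : ∀ n, V (n + 1) ≤ β ^ (n + 1) * V n ^ α) (n : ℕ) :
    β ^ deGiorgiExponent α n * V n ≤ (β ^ (α / (α - 1) ^ 2) * V 0) ^ (α ^ n) := by
  have hW (k : ℕ) : 0 ≤ β ^ deGiorgiExponent α k * V k := mul_nonneg (by positivity) (hV k)
  have hWrec (k : ℕ) : β ^ deGiorgiExponent α (k + 1) * V (k + 1) ≤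
      (β ^ deGiorgiExponent α k * V k) ^ α :=
    rpow_mul_le_rpow_mul_rpow hβ (hV k) (deGiorgiExponent_succ_add hα₁ k)
      (by simpa only [rpow_natCast] using hrec k)
  simpa only [deGiorgiExponent_zero] using le_rpow_pow_of_le_rpow hα₀ hW hWrec n

/-- the abstract De Giorgi iteration lemma. -/
theorem de_giorgi_iteration (α β : ℝ) (hα : 1 < α) (hβ : 1 ≤ β)
    (V : ℕ → ℝ) (hV : ∀ n, 0 ≤ V n)
    (hrec : ∀ n : ℕ, 1 ≤ n → V n ≤ β ^ n * V (n - 1) ^ α) :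
    (∀ n : ℕ, V n ≤ (β ^ (α / (α - 1) ^ 2) * V 0) ^ ((α ^ n : ℝ))) ∧
      (V 0 < β ^ (-(α / (α - 1) ^ 2)) → Tendsto V atTop (nhds 0)) := by
  have hβ₀ : 0 < β := by linarith
  have hbound (n : ℕ) : V n ≤ (β ^ (α / (α - 1) ^ 2) * V 0) ^ (α ^ n) :=
    calc V n ≤ β ^ deGiorgiExponent α n * V n :=
          le_mul_of_one_le_left (hV n) (one_le_rpow hβ (deGiorgiExponent_nonneg hα n))
      _ ≤ (β ^ (α / (α - 1) ^ 2) * V 0) ^ (α ^ n) :=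
          rpow_deGiorgiExponent_mul_le (by linarith) hα.ne' hβ₀ hV
            (fun k => hrec (k + 1) k.succ_pos) n
  refine ⟨hbound, fun hsmall => ?_⟩
  have hbase_nonneg : 0 ≤ β ^ (α / (α - 1) ^ 2) * V 0 := mul_nonneg (by positivity) (hV 0)
  have hbase_lt_one : β ^ (α / (α - 1) ^ 2) * V 0 < 1 := by
    rwa [rpow_neg hβ₀.le, ← one_div, lt_div_iff₀' (by positivity)] at hsmall
  exact squeeze_zero hV hbound
    (tendsto_rpow_pow_atTop_nhds_zero hα (by linarith) hbase_lt_one)
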